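/- arXiv:0805.1273 — 2 statements merged into one kernel-verified Lean document; each statement's English description precedes it below -/
import Mathlib

section
/- For every integer n >= 0: \sum_{p=0}^{n} (-1)^{n-p} * C(n, p) * C_p = \sum_{p=0}^{\lfloor n/2 \rfloor} (1/(2p+1)) * C(3p, p) * C(p, n-2p), and \sum_{p=0}^{n} (-1)^{n-p} * C(n+1, p+1) * C_{p+1} = \sum_{p=0}^{\lfloor n/2 \rfloor} (1/(2p+1)) * C(3p+1, p+1) * C(p, n-2p). -/
open Finset

/-!
Let `C = 1 + X * C ^ 2` be the Catalan series and `T = 1 + X * T ^ 3` the ternary tree series. The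
signed binomial transform of the Catalan numbers has generating function
`R = (1 + X)⁻¹ * C(X / (1 + X))`, so `R` is a root of the quadratic
`X * (1 + X) * R ^ 2 - (1 + X) * R + 1 = 0`. Multiplying this quadratic by `1 + X * R` gives the
cubic `X ^ 2 * (1 + X) * R ^ 3 - R + 1 = 0`, which `T(X ^ 2 * (1 + X))` also satisfies and which has
only one power series root. Hence `R = T(X ^ 2 * (1 + X))`, and the first identity compares
coefficients. The quadratic also reads `R = (1 + X)⁻¹ + X * R ^ 2`, so the second left-hand side is
a coefficient of `R ^ 2`, and the second identity compares the coefficients of `R ^ 2` and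
`T(X ^ 2 * (1 + X)) ^ 2`.
-/

section Series

open PowerSeries

section Substitution

variable {R : Type*} [CommRing R]

theorem coeff_mul_subst {a : R⟦X⟧} (ha : constantCoeff a = 0) (f g : R⟦X⟧) (n : ℕ) :
    coeff n (g * f.subst a) = ∑ p ∈ range (n + 1), coeff p f * coeff n (g * a ^ p) := by
  have coeff_subst_of_le : ∀ i ≤ n,
      coeff i (f.subst a) = ∑ p ∈ range (n + 1), coeff p f * coeff i (a ^ p) := by
    intro i hi
    rw [coeff_subst' (HasSubst.of_constantCoeff_zero' ha)]
    refine finsum_eq_sum_of_support_subset _ fun p hp ↦ ?_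
    by_contra hpn
    have i_lt_p : i < p := by
      rw [mem_coe, mem_range] at hpn
      lia
    have coeff_pow_eq_zero : coeff i (a ^ p) = 0 :=
      coeff_of_lt_order i ((Nat.cast_lt.mpr i_lt_p).trans_le
        (le_order_pow_of_constantCoeff_eq_zero p ha))
    exact hp (by simp only [coeff_pow_eq_zero, smul_zero])
  simp only [coeff_mul, mul_sum]
  rw [sum_comm]
  refine sum_congr rfl fun ij hij ↦ ?_
  rw [coeff_subst_of_le ij.2 (Finset.HasAntidiagonal.antidiagonal.snd_le hij), mul_sum]
  exact sum_congr rfl fun p _ ↦ mul_left_comm _ _ _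

theorem coeff_subst_X_sq_mul_one_add_X (f : R⟦X⟧) (n : ℕ) :
    coeff n (f.subst (X ^ 2 * (1 + X) : R⟦X⟧)) =
      ∑ p ∈ range (n / 2 + 1), coeff p f * p.choose (n - 2 * p) := by
  have coeff_pow (p : ℕ) : coeff n (1 * (X ^ 2 * (1 + X) : R⟦X⟧) ^ p) =
      if 2 * p ≤ n then (p.choose (n - 2 * p) : R) else 0 := by
    rw [one_mul, mul_pow, ← pow_mul, coeff_X_pow_mul']
    congr 1
    rw [← Polynomial.coeff_one_add_X_pow, ← Polynomial.coeff_coe, Polynomial.coe_pow,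
      Polynomial.coe_add, Polynomial.coe_one, Polynomial.coe_X]
  rw [← one_mul (f.subst _), coeff_mul_subst (by simp)]
  simp only [coeff_pow, mul_ite, mul_zero]
  rw [← sum_filter]
  refine sum_congr ?_ fun _ _ ↦ rfl
  ext p
  simp only [mem_filter, mem_range]
  lia

end Substitution

section BinomialTransform

variable {K : Type*} [Field K]

theorem one_add_X_mul_inv : (1 + X : K⟦X⟧) * (1 + X)⁻¹ = 1 :=
  PowerSeries.mul_inv_cancel _ (by simp)

theorem coeff_inv_one_add_X_pow (p n : ℕ) :
    coeff n ((1 + X : K⟦X⟧)⁻¹ ^ (p + 1)) = (-1) ^ n * (p + n).choose p := by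
  have inv_eq_rescale : (1 + X : K⟦X⟧)⁻¹ = rescale (-1) (mk 1) := by
    rw [PowerSeries.inv_eq_iff_mul_eq_one (by simp)]
    simpa [sub_neg_eq_add] using congrArg (rescale (-1 : K)) (mk_one_mul_one_sub_eq_one K)
  rw [inv_eq_rescale, ← map_pow, mk_one_pow_eq_mk_choose_add, coeff_rescale, coeff_mk]

theorem coeff_inv_one_add_X_mul_subst (f : K⟦X⟧) (n : ℕ) :
    coeff n ((1 + X)⁻¹ * f.subst (X * (1 + X)⁻¹ : K⟦X⟧)) =
      ∑ p ∈ range (n + 1), (-1) ^ (n - p) * n.choose p * coeff p f := by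
  rw [coeff_mul_subst (by simp)]
  refine sum_congr rfl fun p hp ↦ ?_
  have hpn : p ≤ n := mem_range_succ_iff.mp hp
  rw [show (1 + X : K⟦X⟧)⁻¹ * (X * (1 + X)⁻¹) ^ p = X ^ p * (1 + X)⁻¹ ^ (p + 1) by ring,
    coeff_X_pow_mul', if_pos hpn, coeff_inv_one_add_X_pow, Nat.add_sub_cancel' hpn]
  ring

end BinomialTransform

section FunctionalEquations

theorem eq_of_eq_one_add_mul_pow {R : Type*} [CommRing R] {f g z : R⟦X⟧} {m : ℕ}
    (hz : constantCoeff z = 0) (hf : f = 1 + z * f ^ m) (hg : g = 1 + z * g ^ m) : f = g := by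
  obtain ⟨q, hq⟩ := sub_dvd_pow_sub_pow f g m
  have isUnit_factor : IsUnit (1 - z * q) := by simp [isUnit_iff_constantCoeff, hz]
  have mul_eq_zero : (f - g) * (1 - z * q) = 0 := by
    linear_combination hf - hg + z * hq
  exact sub_eq_zero.mp (isUnit_factor.mul_left_eq_zero.mp mul_eq_zero)

theorem eq_of_succ_eq_add_X_mul {R : Type*} [Semiring R] {m : ℕ} {F G : ℕ → R⟦X⟧}
    (h0 : F 0 = G 0) (hF : ∀ k, F (k + 1) = F k + X * F (k + m))
    (hG : ∀ k, G (k + 1) = G k + X * G (k + m)) : F = G := by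
  -- Lexicographic induction on `(n, k)`: the factor `X` lowers `n`, so `k + m` is harmless.
  have coeff_eq : ∀ n k, coeff n (F k) = coeff n (G k) := by
    intro n
    induction n with
    | zero =>
      intro k
      induction k with
      | zero => rw [h0]
      | succ k ihk => simpa [hF, hG] using ihk
    | succ n ihn =>
      intro k
      induction k with
      | zero => rw [h0]
      | succ k ihk => rw [hF, hG, map_add, map_add, coeff_succ_X_mul, coeff_succ_X_mul, ihk, ihn]
  funext k
  ext n
  exact coeff_eq n k

theorem eq_pow_of_succ_eq_add_X_mul {R : Type*} [CommSemiring R] {m : ℕ} {F : ℕ → R⟦X⟧}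
    (h0 : F 0 = 1) (hF : ∀ k, F (k + 1) = F k + X * F (k + m)) (k : ℕ) : F k = F 1 ^ k := by
  have succ_eq_mul : (fun k ↦ F (k + 1)) = fun k ↦ F k * F 1 :=
    eq_of_succ_eq_add_X_mul (m := m) (by simp [h0])
      (fun k ↦ by rw [hF (k + 1), add_right_comm k 1 m])
      (fun k ↦ by rw [hF k]; ring)
  induction k with
  | zero => rw [h0, pow_zero]
  | succ k ih => rw [congrFun succ_eq_mul k, ih, pow_succ]

end FunctionalEquations

section Raney

/-- The Raney (two-parameter Fuss–Catalan) number `k / (m * p + k) * (m * p + k).choose p`, the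
coefficient of `X ^ p` in the `k`-th power of the series `B = 1 + X * B ^ m`. The factor `m * p + k`
is absorbed into the binomial because the quotient is `0 / 0` at `k = p = 0`, where the value is
`1`; the truncated subtraction only matters for `m = k = 0`, where the factor `k` vanishes. -/
def raney (m k : ℕ) : ℕ → ℚ
  | 0 => 1
  | p + 1 => k / (p + 1) * (m * (p + 1) + k - 1).choose p

theorem raney_succ_succ (m k p : ℕ) :
    raney m (k + 1) (p + 1) = raney m k (p + 1) + raney m (k + m) p := by
  rcases p with _ | p
  · simp [raney]
  rcases hN : m * (p + 2) + k with _ | N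
  · obtain ⟨rfl, rfl⟩ : m = 0 ∧ k = 0 := by simpa using hN
    simp [raney]
  have absorption := Nat.add_one_mul_choose_eq N p
  have pascal := Nat.choose_succ_succ' N p
  simp only [raney, show m * (p + 1 + 1) + (k + 1) - 1 = N + 1 by lia,
    show m * (p + 1 + 1) + k - 1 = N by lia, show m * (p + 1) + (k + m) - 1 = N by lia]
  qify at absorption pascal hN
  push_cast
  field_simp
  linear_combination k * (p + 1) * pascal - absorption - N.choose p * hN

theorem raney_three_one (p : ℕ) : raney 3 1 p = 1 / (2 * p + 1) * (3 * p).choose p := by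
  cases p with
  | zero => simp [raney]
  | succ p =>
    have choose_ratio := Nat.choose_succ_right_eq (3 * (p + 1)) p
    rw [show 3 * (p + 1) - p = 2 * p + 3 by lia] at choose_ratio
    qify at choose_ratio
    simp only [raney, Nat.add_sub_cancel]
    push_cast
    field_simp
    linear_combination -choose_ratio

theorem raney_three_two (p : ℕ) :
    raney 3 2 p = 1 / (2 * p + 1) * (3 * p + 1).choose (p + 1) := by
  cases p with
  | zero => simp [raney]
  | succ p =>
    have lower_ratio := Nat.choose_succ_right_eq (3 * (p + 1) + 1) p
    have upper_ratio := Nat.choose_succ_right_eq (3 * (p + 1) + 1) (p + 1)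
    rw [show 3 * (p + 1) + 1 - p = 2 * p + 4 by lia] at lower_ratio
    rw [show 3 * (p + 1) + 1 - (p + 1) = 2 * p + 3 by lia] at upper_ratio
    qify at lower_ratio upper_ratio
    simp only [raney, show 3 * (p + 1) + 2 - 1 = 3 * (p + 1) + 1 by lia]
    push_cast
    field_simp
    refine mul_left_cancel₀ (show (p + 2 : ℚ) ≠ 0 by positivity) ?_
    linear_combination -(2 * p + 3) * lower_ratio - (p + 1) * upper_ratio

/-- The generating function of the Raney numbers with parameters `m` and `k`: the `k`-th power of
the generalized binomial series `B = 1 + X * B ^ m`. -/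
noncomputable def raneySeries (m k : ℕ) : ℚ⟦X⟧ := mk (raney m k)

theorem raneySeries_zero_right (m : ℕ) : raneySeries m 0 = 1 := by
  ext n
  cases n <;> simp [raneySeries, raney, coeff_one]

theorem raneySeries_succ (m k : ℕ) :
    raneySeries m (k + 1) = raneySeries m k + X * raneySeries m (k + m) := by
  ext n
  cases n with
  | zero => simp [raneySeries, raney]
  | succ n => simp [raneySeries, coeff_succ_X_mul, raney_succ_succ]

theorem raneySeries_eq_pow (m k : ℕ) : raneySeries m k = raneySeries m 1 ^ k :=
  eq_pow_of_succ_eq_add_X_mul (raneySeries_zero_right m) (raneySeries_succ m) k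

theorem raneySeries_one_eq_one_add_X_mul_pow (m : ℕ) :
    raneySeries m 1 = 1 + X * raneySeries m 1 ^ m := by
  rw [← raneySeries_eq_pow, ← raneySeries_zero_right m]
  simpa only [zero_add] using raneySeries_succ m 0

end Raney

section Riordan

theorem cast_catalan (p : ℕ) : (catalan p : ℚ) = 1 / (p + 1) * (2 * p).choose p := by
  rw [← Nat.centralBinom_eq_two_mul_choose, ← succ_mul_catalan_eq_centralBinom]
  push_cast
  field_simp

/-- The generating function of the Riordan numbers, given as the signed binomial transform of the
Catalan numbers. -/
noncomputable def riordanSeries : ℚ⟦X⟧ :=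
  mk fun n ↦ ∑ p ∈ range (n + 1), (-1) ^ (n - p) * n.choose p * (catalan p : ℚ)

theorem riordanSeries_eq_inv_one_add_X_mul_subst :
    riordanSeries = (1 + X)⁻¹ *
      (catalanSeries.map (Nat.castRingHom ℚ)).subst (X * (1 + X)⁻¹ : ℚ⟦X⟧) := by
  ext n
  simp [riordanSeries, coeff_inv_one_add_X_mul_subst]

theorem riordanSeries_eq_inv_add_X_mul_sq :
    riordanSeries = (1 + X)⁻¹ + X * riordanSeries ^ 2 := by
  have hy : HasSubst (X * (1 + X)⁻¹ : ℚ⟦X⟧) := .of_constantCoeff_zero' (by simp)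
  have catalan_eq := congrArg (fun f ↦ substAlgHom hy (f.map (Nat.castRingHom ℚ)))
    catalanSeries_sq_mul_X_add_one
  simp only [map_add, map_mul, map_pow, map_X, map_one, substAlgHom_X] at catalan_eq
  rw [coe_substAlgHom] at catalan_eq
  rw [riordanSeries_eq_inv_one_add_X_mul_subst]
  linear_combination -(1 + X)⁻¹ * catalan_eq

theorem riordanSeries_eq_one_add_mul_pow_three :
    riordanSeries = 1 + X ^ 2 * (1 + X) * riordanSeries ^ 3 := by
  linear_combination (1 + X) * (1 + X * riordanSeries) * riordanSeries_eq_inv_add_X_mul_sq +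
    (1 + X * riordanSeries) * one_add_X_mul_inv (K := ℚ)

theorem riordanSeries_eq_subst :
    riordanSeries = (raneySeries 3 1).subst (X ^ 2 * (1 + X) : ℚ⟦X⟧) := by
  have hz : HasSubst (X ^ 2 * (1 + X) : ℚ⟦X⟧) := .of_constantCoeff_zero' (by simp)
  have ternary_eq := congrArg (substAlgHom hz) (raneySeries_one_eq_one_add_X_mul_pow 3)
  simp only [map_add, map_mul, map_pow, map_one, substAlgHom_X] at ternary_eq
  rw [coe_substAlgHom] at ternary_eq
  exact eq_of_eq_one_add_mul_pow (by simp) riordanSeries_eq_one_add_mul_pow_three ternary_eq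

theorem coeff_riordanSeries_pow (k n : ℕ) :
    coeff n (riordanSeries ^ k) =
      ∑ p ∈ range (n / 2 + 1), raney 3 k p * p.choose (n - 2 * p) := by
  have pow_eq_subst :
      riordanSeries ^ k = (raneySeries 3 k).subst (X ^ 2 * (1 + X) : ℚ⟦X⟧) := by
    rw [riordanSeries_eq_subst, raneySeries_eq_pow 3 k,
      subst_pow (.of_constantCoeff_zero' (by simp))]
  simp only [pow_eq_subst, coeff_subst_X_sq_mul_one_add_X, raneySeries, coeff_mk]

theorem coeff_riordanSeries (n : ℕ) :
    coeff n riordanSeries =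
      ∑ p ∈ range (n + 1), (-1) ^ (n - p) * n.choose p * (catalan p : ℚ) :=
  coeff_mk _ _

theorem coeff_riordanSeries_sq (n : ℕ) :
    coeff n (riordanSeries ^ 2) =
      ∑ p ∈ range (n + 1), (-1) ^ (n - p) * (n + 1).choose (p + 1) * (catalan (p + 1) : ℚ) := by
  have coeff_inv : coeff (n + 1) (1 + X : ℚ⟦X⟧)⁻¹ = (-1) ^ (n + 1) := by
    simpa using coeff_inv_one_add_X_pow (K := ℚ) 0 (n + 1)
  have coeff_eq := congrArg (coeff (n + 1)) riordanSeries_eq_inv_add_X_mul_sq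
  rw [map_add, coeff_succ_X_mul, coeff_inv, coeff_riordanSeries, sum_range_succ'] at coeff_eq
  simp only [Nat.add_sub_add_right, Nat.sub_zero, Nat.choose_zero_right, catalan_zero,
    Nat.cast_one, mul_one] at coeff_eq
  linear_combination -coeff_eq

end Riordan

end Series

theorem stmt18 (n : ℕ) :
    (∑ p ∈ Finset.range (n + 1),
        (-1 : ℚ) ^ (n - p) * Nat.choose n p * ((1 : ℚ) / (p + 1) * Nat.choose (2 * p) p)) =
      (∑ p ∈ Finset.range (n / 2 + 1),
        (1 : ℚ) / (2 * p + 1) * Nat.choose (3 * p) p * Nat.choose p (n - 2 * p)) ∧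
    (∑ p ∈ Finset.range (n + 1),
        (-1 : ℚ) ^ (n - p) * Nat.choose (n + 1) (p + 1) *
          ((1 : ℚ) / (p + 2) * Nat.choose (2 * (p + 1)) (p + 1))) =
      ∑ p ∈ Finset.range (n / 2 + 1),
        (1 : ℚ) / (2 * p + 1) * Nat.choose (3 * p + 1) (p + 1) * Nat.choose p (n - 2 * p) := by
  have cast_catalan_succ (p : ℕ) :
      (catalan (p + 1) : ℚ) = 1 / (p + 2) * (2 * (p + 1)).choose (p + 1) := by
    rw [cast_catalan]
    push_cast
    ring
  constructor
  · simp only [← cast_catalan, ← raney_three_one]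
    rw [← coeff_riordanSeries, ← coeff_riordanSeries_pow, pow_one]
  · simp only [← cast_catalan_succ, ← raney_three_two]
    rw [← coeff_riordanSeries_sq, coeff_riordanSeries_pow]
end

section
/- For every integer n >= 0: \sum_{p=0}^{2n} (-1)^{p} * ((3p+2)/(2n+2p+2)) * C(3n, n+p) * C_p = (1/(2n+1)) * C(3n, n), and \sum_{p=0}^{2n} (-1)^{p} * ((3p+4)/(2n+2p+4)) * C(3n+1, n+p+1) * C_{p+1} = (1/(2n+1)) * C(3n+1, n+1). -/
open Finset

/-!
Write `c` for the Catalan series evaluated at `-X`, so that `c = 1 - X * c ^ 2`. Once the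
denominators are absorbed into the binomial coefficients, the sums become coefficients of
`(1 + X) ^ N * (r * c + 3 * X * c')`, with `r = 2` for the first and `r = 1` for the second (whose
index is shifted by one, so that the constant term of `c` contributes separately). The quadratic
equation gives `(1 + X) * c = 1 + X ^ 2 * c ^ 3` and `(1 + X) * c ^ 2 = 1 - X * c ^ 3`, so expanding
`(1 + X) ^ N` by the binomial theorem leaves the coefficients of `X ^ (r * i)` in
`c⁻¹ ^ (3 * i + 1) * (r * c + 3 * X * c')`. For `i > 0` these vanish, because `i` times that series
is `r * i * g - X * g'` with `g = c⁻¹ ^ (3 * i)`; hence a single binomial coefficient survives.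
-/

section EulerOperator

open PowerSeries

variable {R : Type*} [CommSemiring R]

/-- The Euler-type operator `r + m * X * d/dX` on power series, which multiplies the coefficient of
`X ^ n` by `m * n + r`; it produces the linear weights `3 * p + r` of the alternating sums. -/
noncomputable def eulerOp (r m : ℕ) (f : R⟦X⟧) : R⟦X⟧ :=
  (r : R⟦X⟧) * f + (m : R⟦X⟧) * (X * d⁄dX R f)

theorem coeff_X_mul_derivative (f : R⟦X⟧) (n : ℕ) :
    coeff n (X * d⁄dX R f) = n * coeff n f := by
  cases n with
  | zero => simp
  | succ n => rw [coeff_succ_X_mul, coeff_derivative, mul_comm, Nat.cast_succ]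

theorem coeff_natCast_mul (a n : ℕ) (f : R⟦X⟧) : coeff n ((a : R⟦X⟧) * f) = a * coeff n f := by
  rw [← map_natCast (C (R := R)), coeff_C_mul]

theorem coeff_eulerOp (r m n : ℕ) (f : R⟦X⟧) :
    coeff n (eulerOp r m f) = (m * n + r) * coeff n f := by
  rw [eulerOp, map_add, coeff_natCast_mul, coeff_natCast_mul, coeff_X_mul_derivative]
  ring

theorem coeff_one_add_X_pow (N k : ℕ) : coeff k ((1 + X : R⟦X⟧) ^ N) = N.choose k := by
  have h : ((1 + X : R⟦X⟧) ^ N) = (((1 + Polynomial.X) ^ N : Polynomial R) : R⟦X⟧) := by simp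
  rw [h, Polynomial.coeff_coe, Polynomial.coeff_one_add_X_pow]

end EulerOperator

section InversePowers

open PowerSeries

variable {R : Type*} [CommRing R]

theorem derivative_inv_pow (u : R⟦X⟧ˣ) (k : ℕ) :
    d⁄dX R ((↑u⁻¹ : R⟦X⟧) ^ k) = -((k : R⟦X⟧) * (↑u⁻¹ : R⟦X⟧) ^ (k + 1) * d⁄dX R ↑u) := by
  cases k with
  | zero => simp
  | succ k =>
    rw [derivative_pow, derivative_inv, Nat.add_sub_cancel]
    ring

theorem natCast_mul_inv_pow_mul_eulerOp (u : R⟦X⟧ˣ) (r m i : ℕ) :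
    (i : R⟦X⟧) * ((↑u⁻¹ : R⟦X⟧) ^ (m * i + 1) * eulerOp r m ↑u) =
      ((r * i : ℕ) : R⟦X⟧) * (↑u⁻¹ : R⟦X⟧) ^ (m * i) - X * d⁄dX R ((↑u⁻¹ : R⟦X⟧) ^ (m * i)) := by
  rw [derivative_inv_pow, eulerOp]
  push_cast
  linear_combination (i * r * (↑u⁻¹ : R⟦X⟧) ^ (m * i)) * u.inv_mul

theorem coeff_inv_pow_mul_eulerOp [IsAddTorsionFree R] (u : R⟦X⟧ˣ) (r m i : ℕ) :
    coeff (r * i) ((↑u⁻¹ : R⟦X⟧) ^ (m * i + 1) * eulerOp r m ↑u) =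
      if i = 0 then (r : R) else 0 := by
  rcases eq_or_ne i 0 with rfl | hi
  · have hu : constantCoeff (↑u⁻¹ : R⟦X⟧) * constantCoeff (u : R⟦X⟧) = 1 := by
      rw [← map_mul, u.inv_mul, map_one]
    simp only [mul_zero, zero_add, pow_one, eulerOp, coeff_zero_eq_constantCoeff, map_mul, map_add,
      map_natCast, constantCoeff_X, zero_mul, add_zero, if_true]
    linear_combination (r : R) * hu
  · rw [if_neg hi]
    refine IsAddTorsionFree.nsmul_right_injective hi ?_
    simp only [nsmul_eq_mul, mul_zero]
    rw [← coeff_natCast_mul, natCast_mul_inv_pow_mul_eulerOp, map_sub, coeff_natCast_mul,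
      coeff_X_mul_derivative, sub_self]

theorem coeff_inv_pow_mul_pow_mul_eulerOp [IsAddTorsionFree R] (u : R⟦X⟧ˣ) (e : R) {r : ℕ}
    (hr : 0 < r) (m k j : ℕ) :
    coeff (r * k) ((↑u⁻¹ : R⟦X⟧) ^ (m * k + 1) * (C e * X ^ r * (u : R⟦X⟧) ^ m) ^ j *
      eulerOp r m ↑u) = if j = k then r * e ^ k else 0 := by
  rcases le_or_gt j k with hjk | hkj
  · obtain ⟨i, rfl⟩ := Nat.exists_eq_add_of_le' hjk
    have hcancel : (↑u⁻¹ : R⟦X⟧) ^ (m * j) * (u : R⟦X⟧) ^ (m * j) = 1 := by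
      rw [← mul_pow, u.inv_mul, one_pow]
    have hfactor : (↑u⁻¹ : R⟦X⟧) ^ (m * (i + j) + 1) * (C e * X ^ r * (u : R⟦X⟧) ^ m) ^ j *
        eulerOp r m ↑u =
        C (e ^ j) * (X ^ (r * j) * ((↑u⁻¹ : R⟦X⟧) ^ (m * i + 1) * eulerOp r m ↑u)) := by
      rw [map_pow]
      linear_combination (C e ^ j * X ^ (r * j) * (↑u⁻¹ : R⟦X⟧) ^ (m * i + 1) *
        eulerOp r m ↑u) * hcancel
    rw [hfactor, coeff_C_mul, mul_add, coeff_X_pow_mul, coeff_inv_pow_mul_eulerOp]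
    rcases eq_or_ne i 0 with rfl | hi
    · simp [mul_comm]
    · rw [if_neg hi, if_neg (by omega), mul_zero]
  · have hfactor : (↑u⁻¹ : R⟦X⟧) ^ (m * k + 1) * (C e * X ^ r * (u : R⟦X⟧) ^ m) ^ j *
        eulerOp r m ↑u = X ^ (r * j) *
        (C e ^ j * (↑u⁻¹ : R⟦X⟧) ^ (m * k + 1) * (u : R⟦X⟧) ^ (m * j) * eulerOp r m ↑u) := by
      ring
    rw [hfactor, coeff_X_pow_mul', if_neg (Nat.mul_lt_mul_of_pos_left hkj hr).not_ge,
      if_neg hkj.ne']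

theorem coeff_pow_mul_eulerOp [IsAddTorsionFree R] {f : R⟦X⟧} {u : R⟦X⟧ˣ} {e : R}
    {a r m N k : ℕ} (hr : 0 < r) (hN : a * N = m * k + 1)
    (hf : f * (u : R⟦X⟧) ^ a = 1 + C e * X ^ r * (u : R⟦X⟧) ^ m) :
    coeff (r * k) (f ^ N * eulerOp r m ↑u) = r * e ^ k * N.choose k := by
  set y := C e * X ^ r * (u : R⟦X⟧) ^ m with hy
  have hpow : f ^ N = (↑u⁻¹ : R⟦X⟧) ^ (m * k + 1) * (y + 1) ^ N := by
    rw [add_comm y, ← hf, ← hN, pow_mul, ← mul_pow, mul_left_comm, ← mul_pow, u.inv_mul, one_pow,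
      mul_one]
  have hexpand : f ^ N * eulerOp r m ↑u = ∑ j ∈ range (N + 1),
      (N.choose j : R⟦X⟧) * ((↑u⁻¹ : R⟦X⟧) ^ (m * k + 1) * y ^ j * eulerOp r m ↑u) := by
    rw [hpow, add_pow, mul_sum, sum_mul]
    refine sum_congr rfl fun j _ => ?_
    rw [one_pow]
    ring
  simp only [hexpand, map_sum, coeff_natCast_mul, hy, coeff_inv_pow_mul_pow_mul_eulerOp u e hr,
    mul_ite, mul_zero, sum_ite_eq', mem_range]
  split_ifs with hk
  · ring
  · rw [Nat.choose_eq_zero_of_lt (by omega), Nat.cast_zero, mul_zero]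

end InversePowers

section AlternatingCatalan

open PowerSeries

variable (R : Type*) [CommRing R]

/-- The generating function `∑ (-1) ^ p * catalan p * X ^ p` of the Catalan numbers with alternating
signs, obtained from the Catalan series by substituting `-X`. -/
noncomputable def altCatalanSeries : R⟦X⟧ :=
  rescale (-1) (catalanSeries.map (Nat.castRingHom R))

theorem coeff_altCatalanSeries (p : ℕ) :
    coeff p (altCatalanSeries R) = (-1) ^ p * catalan p := by
  simp [altCatalanSeries, coeff_rescale]

theorem altCatalanSeries_eq_one_sub : altCatalanSeries R = 1 - X * altCatalanSeries R ^ 2 := by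
  have h := congrArg (fun f => rescale (-1 : R) (f.map (Nat.castRingHom R)))
    catalanSeries_sq_mul_X_add_one
  simp only [map_add, map_mul, map_pow, map_one, map_X, rescale_X, map_neg] at h
  change altCatalanSeries R ^ 2 * _ + 1 = altCatalanSeries R at h
  linear_combination -h

theorem one_add_X_mul_altCatalanSeries :
    (1 + X) * altCatalanSeries R = 1 + X ^ 2 * altCatalanSeries R ^ 3 := by
  linear_combination (1 - X * altCatalanSeries R) * altCatalanSeries_eq_one_sub R

theorem one_add_X_mul_altCatalanSeries_sq :
    (1 + X) * altCatalanSeries R ^ 2 = 1 - X * altCatalanSeries R ^ 3 := by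
  linear_combination (1 + altCatalanSeries R) * altCatalanSeries_eq_one_sub R

theorem isUnit_altCatalanSeries : IsUnit (altCatalanSeries R) := by
  rw [isUnit_iff_constantCoeff, ← coeff_zero_eq_constantCoeff_apply, coeff_altCatalanSeries]
  simp

theorem coeff_one_add_X_pow_mul_eulerOp_altCatalanSeries (r m N k : ℕ) :
    coeff k ((1 + X) ^ N * eulerOp r m (altCatalanSeries R)) =
      ∑ p ∈ range (k + 1), (-1) ^ p * (m * p + r) * N.choose (k - p) * (catalan p : R) := by
  rw [mul_comm, coeff_mul, Nat.sum_antidiagonal_eq_sum_range_succ_mk]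
  refine sum_congr rfl fun p _ => ?_
  rw [coeff_eulerOp, coeff_altCatalanSeries, coeff_one_add_X_pow]
  ring

variable [IsAddTorsionFree R]

theorem sum_alternating_choose_mul_catalan (n : ℕ) :
    ∑ p ∈ range (2 * n + 1),
      (-1) ^ p * (3 * p + 2) * (3 * n + 1).choose (2 * n - p) * (catalan p : R) =
      2 * (3 * n + 1).choose n := by
  obtain ⟨u, hu⟩ := isUnit_altCatalanSeries R
  have hf : (1 + X) * (u : R⟦X⟧) ^ 1 = 1 + C 1 * X ^ 2 * (u : R⟦X⟧) ^ 3 := by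
    rw [hu, pow_one, map_one, one_mul, one_add_X_mul_altCatalanSeries]
  have h := coeff_pow_mul_eulerOp two_pos (one_mul (3 * n + 1)) hf
  rw [hu, coeff_one_add_X_pow_mul_eulerOp_altCatalanSeries] at h
  simpa using h

theorem sum_alternating_choose_mul_catalan_succ (n : ℕ) :
    ∑ p ∈ range (2 * n + 1),
      (-1) ^ p * (3 * p + 4) * (3 * n + 2).choose (2 * n - p) * (catalan (p + 1) : R) =
      2 * (3 * n + 2).choose (n + 1) := by
  obtain ⟨u, hu⟩ := isUnit_altCatalanSeries R
  have hf : (1 + X) * (u : R⟦X⟧) ^ 2 = 1 + C (-1) * X ^ 1 * (u : R⟦X⟧) ^ 3 := by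
    rw [hu, one_add_X_mul_altCatalanSeries_sq, map_neg, map_one]
    ring
  have h := coeff_pow_mul_eulerOp (k := 2 * n + 1) one_pos
    (show 2 * (3 * n + 2) = 3 * (2 * n + 1) + 1 by ring) hf
  rw [hu, one_mul, coeff_one_add_X_pow_mul_eulerOp_altCatalanSeries, sum_range_succ',
    Nat.choose_symm_of_eq_add (show 3 * n + 2 = (2 * n + 1) + (n + 1) by ring)] at h
  have hterm (p : ℕ) : (-1 : R) ^ (p + 1) * ((3 : ℕ) * (p + 1 : ℕ) + (1 : ℕ)) *
      (3 * n + 2).choose (2 * n + 1 - (p + 1)) * (catalan (p + 1) : R) =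
      -((-1) ^ p * (3 * p + 4) * (3 * n + 2).choose (2 * n - p) * (catalan (p + 1) : R)) := by
    rw [Nat.add_sub_add_right]
    push_cast
    ring
  have hzero : (3 * n + 2).choose (2 * n + 1 - 0) = (3 * n + 2).choose (n + 1) :=
    Nat.choose_symm_of_eq_add (by omega)
  have hsign : (-1 : R) ^ (2 * n + 1) = -1 := Odd.neg_one_pow ⟨n, rfl⟩
  simp only [hterm, sum_neg_distrib, hzero, hsign, catalan_zero] at h
  push_cast at h
  linear_combination -h

end AlternatingCatalan

section Absorption

variable {K : Type*} [Field K] [CharZero K]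

theorem choose_eq_add_one_div_mul_choose {N k l : ℕ} (h : N = k + l) :
    (N.choose k : K) = (k + 1) / (N + 1) * (N + 1).choose l := by
  have habsorb : ((N : K) + 1) * N.choose k = (N + 1).choose (k + 1) * (k + 1) := by
    exact_mod_cast Nat.add_one_mul_choose_eq N k
  rw [← Nat.choose_symm_of_eq_add (show N + 1 = (k + 1) + l by omega), div_mul_eq_mul_div,
    eq_div_iff (Nat.cast_add_one_ne_zero N), mul_comm, habsorb, mul_comm]

theorem one_div_mul_choose_eq_catalan (p : ℕ) :
    (1 : K) / (p + 1) * (2 * p).choose p = catalan p := by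
  have h : ((p : K) + 1) * catalan p = (2 * p).choose p := by
    exact_mod_cast succ_mul_catalan_eq_centralBinom p
  rw [← h, ← mul_assoc, one_div_mul_cancel (Nat.cast_add_one_ne_zero p), one_mul]

end Absorption

theorem summand_eq_choose_mul_catalan {n p : ℕ} (hp : p ≤ 2 * n) :
    (-1 : ℚ) ^ p * (3 * p + 2) / (2 * n + 2 * p + 2) * (3 * n).choose (n + p) *
        (1 / (p + 1) * (2 * p).choose p) =
      1 / (2 * (3 * n + 1)) *
        ((-1) ^ p * (3 * p + 2) * (3 * n + 1).choose (2 * n - p) * catalan p) := by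
  rw [one_div_mul_choose_eq_catalan,
    choose_eq_add_one_div_mul_choose (show 3 * n = (n + p) + (2 * n - p) by omega)]
  push_cast
  field_simp

theorem summand_eq_choose_mul_catalan_succ {n p : ℕ} (hp : p ≤ 2 * n) :
    (-1 : ℚ) ^ p * (3 * p + 4) / (2 * n + 2 * p + 4) * (3 * n + 1).choose (n + p + 1) *
        (1 / (p + 2) * (2 * (p + 1)).choose (p + 1)) =
      1 / (2 * (3 * n + 2)) *
        ((-1) ^ p * (3 * p + 4) * (3 * n + 2).choose (2 * n - p) * catalan (p + 1)) := by
  have hcatalan : (1 : ℚ) / (p + 2) * (2 * (p + 1)).choose (p + 1) = catalan (p + 1) := by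
    rw [← one_div_mul_choose_eq_catalan, Nat.cast_succ, add_assoc, one_add_one_eq_two]
  rw [hcatalan,
    choose_eq_add_one_div_mul_choose (show 3 * n + 1 = (n + p + 1) + (2 * n - p) by omega)]
  push_cast
  field_simp
  ring

theorem stmt19 (n : ℕ) :
    (∑ p ∈ Finset.range (2 * n + 1),
        (-1 : ℚ) ^ p * ((3 : ℚ) * p + 2) / (2 * n + 2 * p + 2) * Nat.choose (3 * n) (n + p) *
          ((1 : ℚ) / (p + 1) * Nat.choose (2 * p) p)) =
      (1 : ℚ) / (2 * n + 1) * Nat.choose (3 * n) n ∧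
    (∑ p ∈ Finset.range (2 * n + 1),
        (-1 : ℚ) ^ p * ((3 : ℚ) * p + 4) / (2 * n + 2 * p + 4) *
          Nat.choose (3 * n + 1) (n + p + 1) *
          ((1 : ℚ) / (p + 2) * Nat.choose (2 * (p + 1)) (p + 1))) =
      (1 : ℚ) / (2 * n + 1) * Nat.choose (3 * n + 1) (n + 1) := by
  constructor
  · rw [sum_congr rfl fun p hp => summand_eq_choose_mul_catalan (mem_range_succ_iff.mp hp),
      ← mul_sum, sum_alternating_choose_mul_catalan,
      Nat.choose_symm_of_eq_add (show 3 * n = n + 2 * n by ring),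
      choose_eq_add_one_div_mul_choose (show 3 * n = 2 * n + n by ring)]
    push_cast
    field_simp
  · rw [sum_congr rfl fun p hp => summand_eq_choose_mul_catalan_succ (mem_range_succ_iff.mp hp),
      ← mul_sum, sum_alternating_choose_mul_catalan_succ,
      Nat.choose_symm_of_eq_add (show 3 * n + 1 = (n + 1) + 2 * n by ring),
      choose_eq_add_one_div_mul_choose (show 3 * n + 1 = 2 * n + (n + 1) by ring)]
    push_cast
    field_simp
    ring
end
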